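/- arXiv:2510.26427 — 3 statements merged into one kernel-verified Lean document; each statement's English description precedes it below -/
import Mathlib

section
/- Discrete Poynting theorem (Proposition 3.1, component form): Let ε₀, μ₀ ∈ ℝ and let E¹,E²,E³, H¹,H²,H³, B¹²,B¹³,B²³, D¹²,D¹³,D²³, J¹²,J¹³,J²³ : ℝ → ℤ³ → ℝ be time-dependent components, each differentiable in t at every lattice point. Assume for all t ∈ ℝ and (k,s,m) ∈ ℤ³: (Faraday) Δ₁E² − Δ₂E¹ = −∂ₜB¹², Δ₁E³ − Δ₃E¹ = −∂ₜB¹³, Δ₂E³ − Δ₃E² = −∂ₜB²³; (Ampère) Δ₁H² − Δ₂H¹ = ∂ₜD¹² + J¹², Δ₁H³ − Δ₃H¹ = ∂ₜD¹³ + J¹³, Δ₂H³ − Δ₃H² = ∂ₜD²³ + J²³; (constitutive D = ε₀∗E) D¹²(t,k,s,m) = ε₀E³(t,k,s,m−1), D¹³(t,k,s,m) = −ε₀E²(t,k,s−1,m), D²³(t,k,s,m) = ε₀E¹(t,k−1,s,m); (constitutive ∗B = μ₀H) B¹²(t,k−1,s−1,m) = μ₀H³(t,k,s,m), B¹³(t,k−1,s,m−1)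 = −μ₀H²(t,k,s,m), B²³(t,k,s−1,m−1) = μ₀H¹(t,k,s,m). Then for all t and (k,s,m): Δ₃[E¹(k,s,m)H²(k+1,s,m) − E²(k,s,m)H¹(k,s+1,m)] − Δ₂[E¹(k,s,m)H³(k+1,s,m) − E³(k,s,m)H¹(k,s,m+1)] + Δ₁[E²(k,s,m)H³(k,s+1,m) − E³(k,s,m)H²(k,s,m+1)] = −(1/2)·∂ₜ[E¹(k,s,m)D²³(k+1,s,m) − E²(k,s,m)D¹³(k,s+1,m) + E³(k,s,m)D¹²(k,s,m+1)] − (1/2)·∂ₜ[B¹²(k,s,m)H³(k+1,s+1,m) − B¹³(k,s,m)H²(k+1,s,m+1) + B²³(k,s,m)H¹(k,s+1,m+1)] − E¹(k,s,m)J²³(k+1,s,m) + E²(k,s,m)J¹³(k,s+1,m) − E³(k,s,m)J¹²(k,s,m+1), where all components are evaluated at time t, ∂ₜ denotes the derivative in t, and the spatial difference operators Δᵢ act in the lattice indices of the whole bracketed expression at fixed t. -/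
/-- Forward difference in the first variable on `ℤ³`. -/
def d1 (f : ℤ → ℤ → ℤ → ℝ) (k s m : ℤ) : ℝ := f (k + 1) s m - f k s m

/-- Forward difference in the second variable on `ℤ³`. -/
def d2 (f : ℤ → ℤ → ℤ → ℝ) (k s m : ℤ) : ℝ := f k (s + 1) m - f k s m

/-- Forward difference in the third variable on `ℤ³`. -/
def d3 (f : ℤ → ℤ → ℤ → ℝ) (k s m : ℤ) : ℝ := f k s (m + 1) - f k s m

/-!
The expressions in the theorem are cup products of cubical cochains, for which the coboundary obeys
the graded Leibniz rule `d (E ⌣ H) = dE ⌣ H - E ⌣ dH`. Faraday's and Ampère's laws turn this into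
`d (E ⌣ H) = -∂ₜB ⌣ H - E ⌣ ∂ₜD - E ⌣ J`. The constitutive relations make `E ⌣ D` and `B ⌣ H`
diagonal quadratic forms in the components of `E` and `H` with time-independent coefficients, so
that `E ⌣ ∂ₜD = ½ ∂ₜ(E ⌣ D)` and `∂ₜB ⌣ H = ½ ∂ₜ(B ⌣ H)`.
-/

/-- A discrete 1-form on `ℤ³`: `cᵢ k s m` is the value on the unit edge leaving `(k, s, m)` in
direction `i`. -/
@[ext]
structure OneForm where
  (c1 c2 c3 : ℤ → ℤ → ℤ → ℝ)

/-- A discrete 2-form on `ℤ³`: `cᵢⱼ k s m` is the value on the unit square spanned at `(k, s, m)`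
by the directions `i < j`. -/
@[ext]
structure TwoForm where
  (c12 c13 c23 : ℤ → ℤ → ℤ → ℝ)

namespace TwoForm

instance : Neg TwoForm := ⟨fun ω => ⟨-ω.c12, -ω.c13, -ω.c23⟩⟩

instance : Add TwoForm := ⟨fun ω η => ⟨ω.c12 + η.c12, ω.c13 + η.c13, ω.c23 + η.c23⟩⟩

/-- The coboundary of a 2-form, the discrete divergence. A 3-form has one component and is encoded
as a function on `ℤ³`. -/
def extDeriv (ω : TwoForm) (k s m : ℤ) : ℝ :=
  d3 ω.c12 k s m - d2 ω.c13 k s m + d1 ω.c23 k s m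

/-- The cup product `ω ⌣ β` of a 2-form and a 1-form: `β` is evaluated on the edge leaving the
corner of the square of `ω` opposite to its base point. -/
def cupOneForm (ω : TwoForm) (β : OneForm) (k s m : ℤ) : ℝ :=
  ω.c12 k s m * β.c3 (k + 1) (s + 1) m - ω.c13 k s m * β.c2 (k + 1) s (m + 1)
    + ω.c23 k s m * β.c1 k (s + 1) (m + 1)

/-- The Hodge star on 2-forms: `⋆ω` is evaluated on an edge through the orthogonal square whose
corner opposite to the base point is the start of the edge. It is not inverse to `OneForm.star`:
`⋆⋆` is the translation by `(-1, -1, -1)`. -/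
def star (ω : TwoForm) : OneForm where
  c1 k s m := ω.c23 k (s - 1) (m - 1)
  c2 k s m := -ω.c13 (k - 1) s (m - 1)
  c3 k s m := ω.c12 (k - 1) (s - 1) m

/-- The componentwise time derivative of a time-dependent 2-form. -/
noncomputable def timeDeriv (ω : ℝ → TwoForm) (t : ℝ) : TwoForm where
  c12 k s m := deriv (fun u => (ω u).c12 k s m) t
  c13 k s m := deriv (fun u => (ω u).c13 k s m) t
  c23 k s m := deriv (fun u => (ω u).c23 k s m) t

end TwoForm

namespace OneForm

/-- The componentwise product, through which a 1-form acts as the diagonal matrix of a material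
tensor (permittivity, permeability) with one coefficient per edge. -/
instance : Mul OneForm := ⟨fun α β => ⟨α.c1 * β.c1, α.c2 * β.c2, α.c3 * β.c3⟩⟩

/-- The 1-form with the same value on every edge, for the material tensor of a homogeneous
isotropic medium. -/
def const (c : ℝ) : OneForm :=
  ⟨fun _ _ _ => c, fun _ _ _ => c, fun _ _ _ => c⟩

/-- The coboundary of a 1-form, the discrete curl. -/
def extDeriv (α : OneForm) : TwoForm where
  c12 k s m := d1 α.c2 k s m - d2 α.c1 k s m
  c13 k s m := d1 α.c3 k s m - d3 α.c1 k s m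
  c23 k s m := d2 α.c3 k s m - d3 α.c2 k s m

/-- The cup product `α ⌣ β` of two 1-forms: `β` is evaluated on the edge leaving the end point of
the edge of `α`. For `α = E`, `β = H` it is the discrete Poynting flux. -/
def cup (α β : OneForm) : TwoForm where
  c12 k s m := α.c1 k s m * β.c2 (k + 1) s m - α.c2 k s m * β.c1 k (s + 1) m
  c13 k s m := α.c1 k s m * β.c3 (k + 1) s m - α.c3 k s m * β.c1 k s (m + 1)
  c23 k s m := α.c2 k s m * β.c3 k (s + 1) m - α.c3 k s m * β.c2 k s (m + 1)

/-- The cup product `α ⌣ ω` of a 1-form and a 2-form: `ω` is evaluated on the square based at the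
end point of the edge of `α`. -/
def cupTwoForm (α : OneForm) (ω : TwoForm) (k s m : ℤ) : ℝ :=
  α.c1 k s m * ω.c23 (k + 1) s m - α.c2 k s m * ω.c13 k (s + 1) m
    + α.c3 k s m * ω.c12 k s (m + 1)

/-- The Hodge star on 1-forms: `⋆α` is evaluated on a square through the orthogonal edge ending at
its base point, which makes `α ⌣ ⋆β` the pointwise Euclidean inner product of `α` and `β`. -/
def star (α : OneForm) : TwoForm where
  c12 k s m := α.c3 k s (m - 1)
  c13 k s m := -α.c2 k (s - 1) m
  c23 k s m := α.c1 (k - 1) s m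

/-- The componentwise time derivative of a time-dependent 1-form. -/
noncomputable def timeDeriv (α : ℝ → OneForm) (t : ℝ) : OneForm where
  c1 k s m := deriv (fun u => (α u).c1 k s m) t
  c2 k s m := deriv (fun u => (α u).c2 k s m) t
  c3 k s m := deriv (fun u => (α u).c3 k s m) t

/-- Differentiability in time of every component of a time-dependent 1-form, with no uniformity
over the lattice. -/
structure TimeDifferentiable (α : ℝ → OneForm) : Prop where
  c1 : ∀ k s m, Differentiable ℝ fun t => (α t).c1 k s m
  c2 : ∀ k s m, Differentiable ℝ fun t => (α t).c2 k s m
  c3 : ∀ k s m, Differentiable ℝ fun t => (α t).c3 k s m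

end OneForm

theorem OneForm.extDeriv_cup (α β : OneForm) (k s m : ℤ) :
    (α.cup β).extDeriv k s m =
      α.extDeriv.cupOneForm β k s m - α.cupTwoForm β.extDeriv k s m := by
  simp only [TwoForm.extDeriv, cup, extDeriv, TwoForm.cupOneForm, cupTwoForm, d1, d2, d3]
  ring

theorem TwoForm.neg_cupOneForm (ω : TwoForm) (β : OneForm) (k s m : ℤ) :
    (-ω).cupOneForm β k s m = -ω.cupOneForm β k s m := by
  change -ω.c12 k s m * _ - -ω.c13 k s m * _ + -ω.c23 k s m * _ = _
  rw [cupOneForm]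
  ring

theorem OneForm.cupTwoForm_add (α : OneForm) (ω η : TwoForm) (k s m : ℤ) :
    α.cupTwoForm (ω + η) k s m = α.cupTwoForm ω k s m + α.cupTwoForm η k s m := by
  change α.c1 k s m * (ω.c23 (k + 1) s m + η.c23 (k + 1) s m)
    - α.c2 k s m * (ω.c13 k (s + 1) m + η.c13 k (s + 1) m)
    + α.c3 k s m * (ω.c12 k s (m + 1) + η.c12 k s (m + 1)) = _
  rw [cupTwoForm, cupTwoForm]
  ring

theorem OneForm.cupTwoForm_star (α β : OneForm) (k s m : ℤ) :
    α.cupTwoForm β.star k s m =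
      α.c1 k s m * β.c1 k s m + α.c2 k s m * β.c2 k s m + α.c3 k s m * β.c3 k s m := by
  simp only [cupTwoForm, star, add_sub_cancel_right]
  ring

theorem TwoForm.cupOneForm_eq_star (ω : TwoForm) (β : OneForm) (k s m : ℤ) :
    ω.cupOneForm β k s m =
      β.c1 k (s + 1) (m + 1) * ω.star.c1 k (s + 1) (m + 1)
        + β.c2 (k + 1) s (m + 1) * ω.star.c2 (k + 1) s (m + 1)
        + β.c3 (k + 1) (s + 1) m * ω.star.c3 (k + 1) (s + 1) m := by
  simp only [cupOneForm, star, add_sub_cancel_right]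
  ring

theorem OneForm.timeDeriv_mul_left (ε : OneForm) (α : ℝ → OneForm) (t : ℝ) :
    timeDeriv (fun u => ε * α u) t = ε * timeDeriv α t := by
  ext k s m <;> exact deriv_const_mul_field _

theorem OneForm.timeDeriv_star (α : ℝ → OneForm) (t : ℝ) :
    TwoForm.timeDeriv (fun u => (α u).star) t = (timeDeriv α t).star := by
  simp only [TwoForm.timeDeriv, timeDeriv, star, deriv.fun_neg]

theorem TwoForm.timeDeriv_star (ω : ℝ → TwoForm) (t : ℝ) :
    OneForm.timeDeriv (fun u => (ω u).star) t = (timeDeriv ω t).star := by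
  simp only [OneForm.timeDeriv, timeDeriv, star, deriv.fun_neg]

theorem hasDerivAt_mul_const_mul_self {𝕜 : Type*} [NontriviallyNormedField 𝕜] {f : 𝕜 → 𝕜} {t : 𝕜}
    (hf : DifferentiableAt 𝕜 f t) (a : 𝕜) :
    HasDerivAt (fun u => f u * (a * f u)) (2 * (f t * (a * deriv f t))) t :=
  (hf.hasDerivAt.fun_mul (hf.hasDerivAt.const_mul a)).congr_deriv (by ring)

theorem deriv_diagonal_ternary_form {𝕜 : Type*} [NontriviallyNormedField 𝕜] {f g h : 𝕜 → 𝕜} {t : 𝕜}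
    (hf : DifferentiableAt 𝕜 f t) (hg : DifferentiableAt 𝕜 g t) (hh : DifferentiableAt 𝕜 h t)
    (a b c : 𝕜) :
    deriv (fun u => f u * (a * f u) + g u * (b * g u) + h u * (c * h u)) t =
      2 * (f t * (a * deriv f t) + g t * (b * deriv g t) + h t * (c * deriv h t)) := by
  have hderiv := ((hasDerivAt_mul_const_mul_self hf a).fun_add
    (hasDerivAt_mul_const_mul_self hg b)).fun_add (hasDerivAt_mul_const_mul_self hh c)
  rw [hderiv.deriv]
  ring

theorem OneForm.deriv_cupTwoForm_of_eq_star_mul {ε : OneForm} {α : ℝ → OneForm} {ω : ℝ → TwoForm}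
    (hα : TimeDifferentiable α) (hω : ∀ t, ω t = (ε * α t).star) (t : ℝ) (k s m : ℤ) :
    deriv (fun u => (α u).cupTwoForm (ω u) k s m) t =
      2 * (α t).cupTwoForm (TwoForm.timeDeriv ω t) k s m := by
  obtain rfl : ω = fun u => (ε * α u).star := funext hω
  simp only [timeDeriv_star, timeDeriv_mul_left, cupTwoForm_star]
  exact deriv_diagonal_ternary_form (hα.c1 k s m t) (hα.c2 k s m t) (hα.c3 k s m t) _ _ _

theorem TwoForm.deriv_cupOneForm_of_star_eq_mul {μ : OneForm} {β : ℝ → OneForm} {ω : ℝ → TwoForm}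
    (hβ : OneForm.TimeDifferentiable β) (hω : ∀ t, (ω t).star = μ * β t) (t : ℝ) (k s m : ℤ) :
    deriv (fun u => (ω u).cupOneForm (β u) k s m) t =
      2 * (timeDeriv ω t).cupOneForm (β t) k s m := by
  simp only [cupOneForm_eq_star, ← timeDeriv_star, hω, OneForm.timeDeriv_mul_left]
  exact deriv_diagonal_ternary_form (hβ.c1 _ _ _ t) (hβ.c2 _ _ _ t) (hβ.c3 _ _ _ t) _ _ _

theorem stmt7_general {ε μ : OneForm} {E H : ℝ → OneForm} {D B J : ℝ → TwoForm}
    (hE : OneForm.TimeDifferentiable E) (hH : OneForm.TimeDifferentiable H)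
    (faraday : ∀ t, (E t).extDeriv = -TwoForm.timeDeriv B t)
    (ampere : ∀ t, (H t).extDeriv = TwoForm.timeDeriv D t + J t)
    (hD : ∀ t, D t = (ε * E t).star) (hB : ∀ t, (B t).star = μ * H t) (t : ℝ) (k s m : ℤ) :
    ((E t).cup (H t)).extDeriv k s m =
      -(1 / 2) * deriv (fun u => (E u).cupTwoForm (D u) k s m) t
        - (1 / 2) * deriv (fun u => (B u).cupOneForm (H u) k s m) t
        - (E t).cupTwoForm (J t) k s m :=
  calc
    ((E t).cup (H t)).extDeriv k s m =
        (E t).extDeriv.cupOneForm (H t) k s m - (E t).cupTwoForm (H t).extDeriv k s m :=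
      OneForm.extDeriv_cup ..
    _ = -(TwoForm.timeDeriv B t).cupOneForm (H t) k s m
        - ((E t).cupTwoForm (TwoForm.timeDeriv D t) k s m + (E t).cupTwoForm (J t) k s m) := by
      rw [faraday, ampere, TwoForm.neg_cupOneForm, OneForm.cupTwoForm_add]
    _ = _ := by
      rw [OneForm.deriv_cupTwoForm_of_eq_star_mul hE hD,
        TwoForm.deriv_cupOneForm_of_star_eq_mul hH hB]
      ring

/-- Discrete Poynting theorem (Proposition 3.1) for the semi-discrete Maxwell
equations on `ℤ³`, in component form. -/
theorem stmt7 (ε₀ μ₀ : ℝ)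
    (E1 E2 E3 H1 H2 H3 B12 B13 B23 D12 D13 D23 J12 J13 J23 : ℝ → ℤ → ℤ → ℤ → ℝ)
    (hE1 : ∀ k s m : ℤ, Differentiable ℝ fun t => E1 t k s m)
    (hE2 : ∀ k s m : ℤ, Differentiable ℝ fun t => E2 t k s m)
    (hE3 : ∀ k s m : ℤ, Differentiable ℝ fun t => E3 t k s m)
    (hH1 : ∀ k s m : ℤ, Differentiable ℝ fun t => H1 t k s m)
    (hH2 : ∀ k s m : ℤ, Differentiable ℝ fun t => H2 t k s m)
    (hH3 : ∀ k s m : ℤ, Differentiable ℝ fun t => H3 t k s m)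
    (hB12 : ∀ k s m : ℤ, Differentiable ℝ fun t => B12 t k s m)
    (hB13 : ∀ k s m : ℤ, Differentiable ℝ fun t => B13 t k s m)
    (hB23 : ∀ k s m : ℤ, Differentiable ℝ fun t => B23 t k s m)
    (hD12 : ∀ k s m : ℤ, Differentiable ℝ fun t => D12 t k s m)
    (hD13 : ∀ k s m : ℤ, Differentiable ℝ fun t => D13 t k s m)
    (hD23 : ∀ k s m : ℤ, Differentiable ℝ fun t => D23 t k s m)
    (hJ12 : ∀ k s m : ℤ, Differentiable ℝ fun t => J12 t k s m)
    (hJ13 : ∀ k s m : ℤ, Differentiable ℝ fun t => J13 t k s m)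
    (hJ23 : ∀ k s m : ℤ, Differentiable ℝ fun t => J23 t k s m)
    -- Faraday's law
    (hFar12 : ∀ (t : ℝ) (k s m : ℤ),
      d1 (E2 t) k s m - d2 (E1 t) k s m = -deriv (fun u => B12 u k s m) t)
    (hFar13 : ∀ (t : ℝ) (k s m : ℤ),
      d1 (E3 t) k s m - d3 (E1 t) k s m = -deriv (fun u => B13 u k s m) t)
    (hFar23 : ∀ (t : ℝ) (k s m : ℤ),
      d2 (E3 t) k s m - d3 (E2 t) k s m = -deriv (fun u => B23 u k s m) t)
    -- Ampère's law
    (hAmp12 : ∀ (t : ℝ) (k s m : ℤ),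
      d1 (H2 t) k s m - d2 (H1 t) k s m
        = deriv (fun u => D12 u k s m) t + J12 t k s m)
    (hAmp13 : ∀ (t : ℝ) (k s m : ℤ),
      d1 (H3 t) k s m - d3 (H1 t) k s m
        = deriv (fun u => D13 u k s m) t + J13 t k s m)
    (hAmp23 : ∀ (t : ℝ) (k s m : ℤ),
      d2 (H3 t) k s m - d3 (H2 t) k s m
        = deriv (fun u => D23 u k s m) t + J23 t k s m)
    -- constitutive relation D = ε₀ ∗E
    (hD12E : ∀ (t : ℝ) (k s m : ℤ), D12 t k s m = ε₀ * E3 t k s (m - 1))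
    (hD13E : ∀ (t : ℝ) (k s m : ℤ), D13 t k s m = -(ε₀ * E2 t k (s - 1) m))
    (hD23E : ∀ (t : ℝ) (k s m : ℤ), D23 t k s m = ε₀ * E1 t (k - 1) s m)
    -- constitutive relation ∗B = μ₀ H
    (hB12H : ∀ (t : ℝ) (k s m : ℤ), B12 t (k - 1) (s - 1) m = μ₀ * H3 t k s m)
    (hB13H : ∀ (t : ℝ) (k s m : ℤ), B13 t (k - 1) s (m - 1) = -(μ₀ * H2 t k s m))
    (hB23H : ∀ (t : ℝ) (k s m : ℤ), B23 t k (s - 1) (m - 1) = μ₀ * H1 t k s m) :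
    ∀ (t : ℝ) (k s m : ℤ),
      d3 (fun k s m => E1 t k s m * H2 t (k + 1) s m
            - E2 t k s m * H1 t k (s + 1) m) k s m
        - d2 (fun k s m => E1 t k s m * H3 t (k + 1) s m
            - E3 t k s m * H1 t k s (m + 1)) k s m
        + d1 (fun k s m => E2 t k s m * H3 t k (s + 1) m
            - E3 t k s m * H2 t k s (m + 1)) k s m
      = -(1 / 2) * deriv (fun u => E1 u k s m * D23 u (k + 1) s m
            - E2 u k s m * D13 u k (s + 1) m + E3 u k s m * D12 u k s (m + 1)) t
        - (1 / 2) * deriv (fun u => B12 u k s m * H3 u (k + 1) (s + 1) m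
            - B13 u k s m * H2 u (k + 1) s (m + 1)
            + B23 u k s m * H1 u k (s + 1) (m + 1)) t
        - E1 t k s m * J23 t (k + 1) s m + E2 t k s m * J13 t k (s + 1) m
        - E3 t k s m * J12 t k s (m + 1) := by
  intro t k s m
  have poynting := stmt7_general (ε := .const ε₀) (μ := .const μ₀)
    (E := fun t => ⟨E1 t, E2 t, E3 t⟩) (H := fun t => ⟨H1 t, H2 t, H3 t⟩)
    (D := fun t => ⟨D12 t, D13 t, D23 t⟩) (B := fun t => ⟨B12 t, B13 t, B23 t⟩)
    (J := fun t => ⟨J12 t, J13 t, J23 t⟩) ⟨hE1, hE2, hE3⟩ ⟨hH1, hH2, hH3⟩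
    (fun t => by ext k s m; exacts [hFar12 t k s m, hFar13 t k s m, hFar23 t k s m])
    (fun t => by ext k s m; exacts [hAmp12 t k s m, hAmp13 t k s m, hAmp23 t k s m])
    (fun t => by ext k s m; exacts [hD12E t k s m, hD13E t k s m, hD23E t k s m])
    (fun t => by
      ext k s m
      exacts [hB23H t k s m, neg_eq_iff_eq_neg.2 (hB13H t k s m), hB12H t k s m])
    t k s m
  refine poynting.trans ?_
  simp only [OneForm.cupTwoForm, TwoForm.cupOneForm]
  ring
end

section
/- Semi-discrete wave equation for the electric field (equation 3.20, component form): Let ε₀, μ₀ ∈ ℝ with ε₀ ≠ 0 and μ₀ ≠ 0, and let E¹,E²,E³, H¹,H²,H³, B¹²,B¹³,B²³, D¹²,D¹³,D²³, J¹²,J¹³,J²³ : ℝ → ℤ³ → ℝ be such that at every lattice point the E-components are twice differentiable in t and the H-, B-, D-, J-components are differentiable in t. Assume for all t and (k,s,m): (Faraday) Δ₁E² − Δ₂E¹ = −∂ₜB¹², Δ₁E³ − Δ₃E¹ = −∂ₜB¹³, Δ₂E³ − Δ₃E² = −∂ₜB²³; (Ampère) Δ₁H² − Δ₂H¹ = ∂ₜD¹²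 + J¹², Δ₁H³ − Δ₃H¹ = ∂ₜD¹³ + J¹³, Δ₂H³ − Δ₃H² = ∂ₜD²³ + J²³; (B = μ₀∗H) B¹²(t,k,s,m) = μ₀H³(t,k,s,m−1), B¹³(t,k,s,m) = −μ₀H²(t,k,s−1,m), B²³(t,k,s,m) = μ₀H¹(t,k−1,s,m); (D = ε₀∗E) D¹²(t,k,s,m) = ε₀E³(t,k,s,m−1), D¹³(t,k,s,m) = −ε₀E²(t,k,s−1,m), D²³(t,k,s,m) = ε₀E¹(t,k−1,s,m); (homogeneous Gauss law, Q = 0) Δ₁D²³ − Δ₂D¹³ + Δ₃D¹² = 0. Then for all t and (k,s,m): −(Δ₁²E¹)(k−1,s,m) − (Δ₂²E¹)(k,s−1,m) − (Δ₃²E¹)(k,s,m−1) + μ₀ε₀·∂ₜ²E¹(k−1,s−1,m−1) = −μ₀·∂ₜJ²³(k,s−1,m−1); −(Δ₁²E²)(k−1,s,m) − (Δ₂²E²)(k,s−1,m) − (Δ₃²E²)(k,s,m−1) + μ₀ε₀·∂ₜ²E²(k−1,s−1,m−1) = μ₀·∂ₜJ¹³(k−1,s,m−1); −(Δ₁²E³)(k−1,s,m)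 − (Δ₂²E³)(k,s−1,m) − (Δ₃²E³)(k,s,m−1) + μ₀ε₀·∂ₜ²E³(k−1,s−1,m−1) = −μ₀·∂ₜJ¹²(k−1,s−1,m), where Δᵢ² = Δᵢ∘Δᵢ and all components are evaluated at time t. -/
/-!
The curl of Faraday's law is governed by `div (curl E)ᵢ = Δᵢ (div E) - (Laplacian of Eᵢ)`, which
needs nothing of the lattice except that forward differences commute. For `B = μ ⋆H` the same
divergence equals `μ ⋆(curl H)`, so Ampère's law turns it into `μ ⋆(∂ₜD + J)`. For `D = ε ⋆E` the
term `⋆D` is not `ε E` but its translate by the sum of the lattice steps, because `⋆⋆` is that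
translation; this is the origin of the shift `(k - 1, s - 1, m - 1)` in the wave equation.
Differentiating in time and using `div E = 0` gives the result.
-/

section ExteriorCalculus

open scoped fwdDiff

section Monoid

variable {M V : Type*} [AddCommMonoid M] [AddCommGroup V]

theorem fwdDiff_comm (a b : M) (f : M → V) : Δ_[a] (Δ_[b] f) = Δ_[b] (Δ_[a] f) := by
  ext x
  simp only [fwdDiff, add_right_comm x a b]
  abel

theorem fwdDiff_zero (a : M) : Δ_[a] (0 : M → V) = 0 :=
  fwdDiff_const a 0

theorem fwdDiff_neg (a : M) (f : M → V) : Δ_[a] (-f) = -Δ_[a] f := by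
  simpa only [neg_one_smul] using fwdDiff_const_smul a (-1 : ℤ) f

end Monoid

variable {ι M V : Type*} [AddCommGroup M] [AddCommGroup V]

theorem fwdDiff_comp_sub (a b : M) (f : M → V) (x : M) :
    Δ_[a] (fun y => f (y - b)) x = Δ_[a] f (x - b) := by
  simpa only [sub_eq_add_neg] using fwdDiff_comp_add a f (-b) x

/-- The exterior derivative of a discrete 1-form `E` on a lattice `M` with steps `h i`; its `(i, j)`
component is the coefficient of the 2-form on the face spanned by `h i` and `h j`. -/
def latticeCurl (h : ι → M) (E : ι → M → V) (i j : ι) : M → V :=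
  Δ_[h i] (E j) - Δ_[h j] (E i)

/-- The divergence (up to sign, the codifferential) of a discrete 1-form. The adjoint of a forward
difference is a backward one, hence the evaluation at `x - h j`. -/
def latticeDiv [Fintype ι] (h : ι → M) (E : ι → M → V) (x : M) : V :=
  ∑ j, Δ_[h j] (E j) (x - h j)

/-- The lattice Laplacian: the divergence of the forward gradient, that is, the sum of the centred
second differences. -/
def latticeLaplacian [Fintype ι] (h : ι → M) (f : M → V) : M → V :=
  latticeDiv h fun j => Δ_[h j] f

section Divergence

variable [Fintype ι] (h : ι → M)

theorem latticeDiv_sub (E F : ι → M → V) :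
    latticeDiv h (E - F) = latticeDiv h E - latticeDiv h F := by
  ext x
  simp only [latticeDiv, fwdDiff, Pi.sub_apply, ← Finset.sum_sub_distrib]
  exact Finset.sum_congr rfl fun j _ => by abel

theorem latticeDiv_neg (E : ι → M → V) : latticeDiv h (-E) = -latticeDiv h E := by
  ext x
  simp only [latticeDiv, fwdDiff, Pi.neg_apply, ← Finset.sum_neg_distrib]
  exact Finset.sum_congr rfl fun j _ => by abel

theorem latticeDiv_smul {R : Type*} [Monoid R] [DistribMulAction R V] (r : R) (E : ι → M → V) :
    latticeDiv h (r • E) = r • latticeDiv h E := by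
  ext x
  simp only [latticeDiv, Pi.smul_apply, fwdDiff_const_smul, Finset.smul_sum]

theorem latticeDiv_fwdDiff (a : M) (E : ι → M → V) :
    latticeDiv h (fun j => Δ_[a] (E j)) = Δ_[a] (latticeDiv h E) := by
  ext x
  simp only [latticeDiv, fwdDiff_comm _ a]
  simp only [fwdDiff, latticeDiv, Finset.sum_sub_distrib, add_sub_right_comm x a]

theorem latticeDiv_latticeCurl (E : ι → M → V) (i : ι) :
    latticeDiv h (latticeCurl h E i) = Δ_[h i] (latticeDiv h E) - latticeLaplacian h (E i) := by
  rw [← latticeDiv_fwdDiff, latticeLaplacian, ← latticeDiv_sub]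
  rfl

end Divergence

/-- The discrete 2-form in three dimensions with components `a`, `b`, `c` on the faces `(0, 1)`,
`(0, 2)`, `(1, 2)`, extended antisymmetrically. -/
def twoForm {α : Type*} [AddGroup α] (a b c : α) : Fin 3 → Fin 3 → α :=
  ![![0, a, b], ![-a, 0, c], ![-b, -c, 0]]

theorem neg_twoForm {α : Type*} [AddGroup α] (a b c : α) :
    -twoForm a b c = twoForm (-a) (-b) (-c) := by
  ext i j
  fin_cases i <;> fin_cases j <;> simp [twoForm]

theorem smul_twoForm {R α : Type*} [Monoid R] [AddGroup α] [DistribMulAction R α] (r : R)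
    (a b c : α) : r • twoForm a b c = twoForm (r • a) (r • b) (r • c) := by
  ext i j
  fin_cases i <;> fin_cases j <;> simp [twoForm]

theorem twoForm_add {α : Type*} [AddCommGroup α] (a b c a' b' c' : α) :
    twoForm a b c + twoForm a' b' c' = twoForm (a + a') (b + b') (c + c') := by
  ext i j
  fin_cases i <;> fin_cases j <;> simp [twoForm, add_comm]

/-- The exterior derivative of a discrete 2-form in three dimensions, as the coefficient of the
resulting 3-form on the unit cell. -/
def extDerivTwo (h : Fin 3 → M) (F : Fin 3 → Fin 3 → M → V) : M → V :=
  Δ_[h 0] (F 1 2) - Δ_[h 1] (F 0 2) + Δ_[h 2] (F 0 1)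

/-- The discrete Hodge star from 1-forms to 2-forms. It pairs the face spanned by `h i` and `h j`
with the edge in the remaining direction `l` that starts at `x - h l`. -/
def hodgeOne (h : Fin 3 → M) (E : Fin 3 → M → V) : Fin 3 → Fin 3 → M → V :=
  twoForm (fun x => E 2 (x - h 2)) (-fun x => E 1 (x - h 1)) (fun x => E 0 (x - h 0))

/-- The discrete Hodge star from 2-forms to 1-forms. Indices are added modulo 3, so that
`(i, i + 1, i + 2)` is a cyclic permutation and no sign occurs. -/
def hodgeTwo (h : Fin 3 → M) (F : Fin 3 → Fin 3 → M → V) (i : Fin 3) (x : M) : V :=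
  F (i + 1) (i + 2) (x - h (i + 1) - h (i + 2))

section Hodge

variable (h : Fin 3 → M) (E : Fin 3 → M → V)

theorem hodgeTwo_hodgeOne (i : Fin 3) (x : M) :
    hodgeTwo h (hodgeOne h E) i x = E i (x - ∑ j, h j) := by
  rw [Fin.sum_univ_three]
  fin_cases i <;> simp [hodgeTwo, hodgeOne, twoForm, sub_add_eq_sub_sub, sub_right_comm]

theorem extDerivTwo_hodgeOne : extDerivTwo h (hodgeOne h E) = latticeDiv h E := by
  ext x
  simp [extDerivTwo, hodgeOne, twoForm, latticeDiv, fwdDiff_neg, fwdDiff_comp_sub,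
    Fin.sum_univ_three]

theorem latticeDiv_hodgeOne (i : Fin 3) :
    latticeDiv h (hodgeOne h E i) = hodgeTwo h (latticeCurl h E) i := by
  ext x
  fin_cases i <;>
    simp [hodgeOne, hodgeTwo, twoForm, latticeDiv, latticeCurl, fwdDiff_zero, fwdDiff_neg,
      fwdDiff_comp_sub, Fin.sum_univ_three, sub_right_comm, neg_add_eq_sub, ← sub_eq_add_neg]

theorem extDerivTwo_smul {R : Type*} [Monoid R] [DistribMulAction R V] (r : R)
    (F : Fin 3 → Fin 3 → M → V) : extDerivTwo h (r • F) = r • extDerivTwo h F := by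
  simp only [extDerivTwo, Pi.smul_apply, fwdDiff_const_smul, smul_add, smul_sub]

end Hodge

end ExteriorCalculus

section Maxwell

variable {𝕜 M V : Type*} [NontriviallyNormedField 𝕜] [AddCommGroup M] [NormedAddCommGroup V]
  [NormedSpace 𝕜 V]

theorem hasDerivAt_latticeDiv {ι : Type*} [Fintype ι] {h : ι → M} {E : 𝕜 → ι → M → V}
    {E' : ι → M → V} {t : 𝕜}
    (hE : ∀ j x, HasDerivAt (fun u => E u j x) (E' j x) t) (x : M) :
    HasDerivAt (fun u => latticeDiv h (E u) x) (latticeDiv h E' x) t :=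
  HasDerivAt.fun_sum fun j _ => (hE j _).sub (hE j _)

theorem stmt10_general {h : Fin 3 → M} {ε μ : 𝕜} (hε : ε ≠ 0)
    {E E' E'' H : 𝕜 → Fin 3 → M → V} {B B' D D' J J' : 𝕜 → Fin 3 → Fin 3 → M → V}
    (hE : ∀ t i x, HasDerivAt (fun u => E u i x) (E' t i x) t)
    (hE' : ∀ t i x, HasDerivAt (fun u => E' u i x) (E'' t i x) t)
    (hB : ∀ t i j x, HasDerivAt (fun u => B u i j x) (B' t i j x) t)
    (hD : ∀ t i j x, HasDerivAt (fun u => D u i j x) (D' t i j x) t)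
    (hJ : ∀ t i j x, HasDerivAt (fun u => J u i j x) (J' t i j x) t)
    (faraday : ∀ t, latticeCurl h (E t) = -B' t)
    (ampere : ∀ t, latticeCurl h (H t) = D' t + J t)
    (hBH : ∀ t, B t = μ • hodgeOne h (H t))
    (hDE : ∀ t, D t = ε • hodgeOne h (E t))
    (gauss : ∀ t, extDerivTwo h (D t) = 0) (t : 𝕜) (i : Fin 3) (x : M) :
    -latticeLaplacian h (E t i) x + (μ * ε) • E'' t i (x - ∑ j, h j)
      = -(μ • hodgeTwo h (J' t) i x) := by
  have div_E : latticeDiv h (E t) = 0 := by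
    rw [← smul_eq_zero_iff_right hε, ← extDerivTwo_hodgeOne, ← extDerivTwo_smul, ← hDE, gauss]
  have star_D' (u : 𝕜) : hodgeTwo h (D' u) i x = ε • E' u i (x - ∑ j, h j) := by
    refine (hD u _ _ _).unique ?_
    convert (hE u i (x - ∑ j, h j)).const_smul ε using 2 with v
    rw [Pi.smul_apply, ← hodgeTwo_hodgeOne h (E v), hDE]
    rfl
  have div_B (u : 𝕜) : latticeDiv h (B u i) x
      = μ • (ε • E' u i (x - ∑ j, h j) + hodgeTwo h (J u) i x) := by
    rw [hBH, Pi.smul_apply, latticeDiv_smul, latticeDiv_hodgeOne, ampere, ← star_D']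
    rfl
  have div_B' : latticeDiv h (B' t i) x
      = μ • (ε • E'' t i (x - ∑ j, h j) + hodgeTwo h (J' t) i x) := by
    refine (hasDerivAt_latticeDiv (hB t i) x).unique ?_
    simp only [div_B]
    exact (((hE' t i _).const_smul ε).add (hJ t _ _ _)).const_smul μ
  have laplacian_E : latticeLaplacian h (E t i) x = latticeDiv h (B' t i) x := by
    have div_curl := latticeDiv_latticeCurl h (E t) i
    rw [faraday, Pi.neg_apply, latticeDiv_neg, div_E, fwdDiff_zero, zero_sub, neg_inj] at div_curl
    rw [div_curl]
  rw [laplacian_E, div_B', smul_add, smul_smul]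
  abel

end Maxwell

section CubicLattice

open scoped fwdDiff

/-- The steps of the cubic lattice, written as triples so that `↿` turns a field on `ℤ³` in the
curried form `ℤ → ℤ → ℤ → ℝ` into a function on the lattice. -/
def cubicStep : Fin 3 → ℤ × ℤ × ℤ := ![(1, 0, 0), (0, 1, 0), (0, 0, 1)]

/-- The pointwise time derivative of a time-dependent field on `ℤ³`. -/
noncomputable def timeDeriv (F : ℝ → ℤ → ℤ → ℤ → ℝ) (t : ℝ) (k s m : ℤ) : ℝ :=
  deriv (fun u => F u k s m) t

theorem uncurry_mk_mk (f : ℤ → ℤ → ℤ → ℝ) (k s m : ℤ) : ↿f (k, s, m) = f k s m :=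
  rfl

theorem fwdDiff_cubicStep_zero (f : ℤ → ℤ → ℤ → ℝ) : Δ_[cubicStep 0] ↿f = ↿(d1 f) := by
  ext ⟨k, s, m⟩
  simp [cubicStep, fwdDiff, d1, uncurry_mk_mk]

theorem fwdDiff_cubicStep_one (f : ℤ → ℤ → ℤ → ℝ) : Δ_[cubicStep 1] ↿f = ↿(d2 f) := by
  ext ⟨k, s, m⟩
  simp [cubicStep, fwdDiff, d2, uncurry_mk_mk]

theorem fwdDiff_cubicStep_two (f : ℤ → ℤ → ℤ → ℝ) : Δ_[cubicStep 2] ↿f = ↿(d3 f) := by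
  ext ⟨k, s, m⟩
  simp [cubicStep, fwdDiff, d3, uncurry_mk_mk]

theorem latticeCurl_cubicStep_eq_twoForm {F1 F2 F3 : ℤ → ℤ → ℤ → ℝ} {G12 G13 G23 : ℤ × ℤ × ℤ → ℝ}
    (h12 : ∀ k s m, d1 F2 k s m - d2 F1 k s m = G12 (k, s, m))
    (h13 : ∀ k s m, d1 F3 k s m - d3 F1 k s m = G13 (k, s, m))
    (h23 : ∀ k s m, d2 F3 k s m - d3 F2 k s m = G23 (k, s, m)) :
    latticeCurl cubicStep ![↿F1, ↿F2, ↿F3] = twoForm G12 G13 G23 := by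
  obtain rfl : ↿(d1 F2) - ↿(d2 F1) = G12 := funext fun _ => h12 _ _ _
  obtain rfl : ↿(d1 F3) - ↿(d3 F1) = G13 := funext fun _ => h13 _ _ _
  obtain rfl : ↿(d2 F3) - ↿(d3 F2) = G23 := funext fun _ => h23 _ _ _
  ext i j
  fin_cases i <;> fin_cases j <;>
    simp [latticeCurl, twoForm, fwdDiff_cubicStep_zero, fwdDiff_cubicStep_one,
      fwdDiff_cubicStep_two]

theorem extDerivTwo_cubicStep_eq {F12 F13 F23 : ℤ → ℤ → ℤ → ℝ} {q : ℤ × ℤ × ℤ → ℝ}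
    (h : ∀ k s m, d1 F23 k s m - d2 F13 k s m + d3 F12 k s m = q (k, s, m)) :
    extDerivTwo cubicStep (twoForm ↿F12 ↿F13 ↿F23) = q := by
  obtain rfl : ↿(d1 F23) - ↿(d2 F13) + ↿(d3 F12) = q := funext fun _ => h _ _ _
  simp [extDerivTwo, twoForm, fwdDiff_cubicStep_zero, fwdDiff_cubicStep_one,
    fwdDiff_cubicStep_two]

theorem neg_latticeLaplacian_cubicStep (f : ℤ → ℤ → ℤ → ℝ) (k s m : ℤ) :
    -latticeLaplacian cubicStep ↿f (k, s, m)
      = -d1 (d1 f) (k - 1) s m - d2 (d2 f) k (s - 1) m - d3 (d3 f) k s (m - 1) := by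
  simp only [latticeLaplacian, latticeDiv, Fin.sum_univ_three, fwdDiff_cubicStep_zero,
    fwdDiff_cubicStep_one, fwdDiff_cubicStep_two, neg_add']
  simp [cubicStep, uncurry_mk_mk]

theorem sum_cubicStep : ∑ j, cubicStep j = (1, 1, 1) := by
  simp [cubicStep, Fin.sum_univ_three]

theorem hodgeTwo_cubicStep (F12 F13 F23 : ℤ → ℤ → ℤ → ℝ) (i : Fin 3) (k s m : ℤ) :
    hodgeTwo cubicStep (twoForm ↿F12 ↿F13 ↿F23) i (k, s, m)
      = ![F23 k (s - 1) (m - 1), -F13 (k - 1) s (m - 1), F12 (k - 1) (s - 1) m] i := by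
  fin_cases i <;> simp [hodgeTwo, twoForm, cubicStep, uncurry_mk_mk]

theorem hasDerivAt_oneForm {F1 F2 F3 : ℝ → ℤ → ℤ → ℤ → ℝ}
    (h1 : ∀ k s m, Differentiable ℝ fun t => F1 t k s m)
    (h2 : ∀ k s m, Differentiable ℝ fun t => F2 t k s m)
    (h3 : ∀ k s m, Differentiable ℝ fun t => F3 t k s m) (t : ℝ) (i : Fin 3) (x : ℤ × ℤ × ℤ) :
    HasDerivAt (fun u => (![↿(F1 u), ↿(F2 u), ↿(F3 u)] : Fin 3 → ℤ × ℤ × ℤ → ℝ) i x)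
      ((![↿(timeDeriv F1 t), ↿(timeDeriv F2 t), ↿(timeDeriv F3 t)] : Fin 3 → ℤ × ℤ × ℤ → ℝ) i x)
      t := by
  fin_cases i
  exacts [(h1 _ _ _ t).hasDerivAt, (h2 _ _ _ t).hasDerivAt, (h3 _ _ _ t).hasDerivAt]

theorem hasDerivAt_twoForm {F12 F13 F23 : ℝ → ℤ → ℤ → ℤ → ℝ}
    (h12 : ∀ k s m, Differentiable ℝ fun t => F12 t k s m)
    (h13 : ∀ k s m, Differentiable ℝ fun t => F13 t k s m)
    (h23 : ∀ k s m, Differentiable ℝ fun t => F23 t k s m) (t : ℝ) (i j : Fin 3)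
    (x : ℤ × ℤ × ℤ) :
    HasDerivAt (fun u => twoForm ↿(F12 u) ↿(F13 u) ↿(F23 u) i j x)
      (twoForm ↿(timeDeriv F12 t) ↿(timeDeriv F13 t) ↿(timeDeriv F23 t) i j x) t := by
  have d12 := (h12 x.1 x.2.1 x.2.2 t).hasDerivAt
  have d13 := (h13 x.1 x.2.1 x.2.2 t).hasDerivAt
  have d23 := (h23 x.1 x.2.1 x.2.2 t).hasDerivAt
  have d0 := hasDerivAt_const t (0 : ℝ)
  fin_cases i <;> fin_cases j
  exacts [d0, d12, d13, d12.neg, d0, d23, d13.neg, d23.neg, d0]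

theorem twoForm_eq_smul_hodgeOne {c : ℝ} {F1 F2 F3 F12 F13 F23 : ℤ → ℤ → ℤ → ℝ}
    (h12 : ∀ k s m, F12 k s m = c * F3 k s (m - 1))
    (h13 : ∀ k s m, F13 k s m = -(c * F2 k (s - 1) m))
    (h23 : ∀ k s m, F23 k s m = c * F1 (k - 1) s m) :
    twoForm ↿F12 ↿F13 ↿F23 = c • hodgeOne cubicStep ![↿F1, ↿F2, ↿F3] := by
  rw [hodgeOne, smul_twoForm]
  congr 1 <;> ext ⟨k, s, m⟩ <;> simp [cubicStep, uncurry_mk_mk, h12, h13, h23]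

end CubicLattice

/-- Semi-discrete wave equation for the electric field (equation 3.20),
in component form. -/
theorem stmt10 (ε₀ μ₀ : ℝ) (hε₀ : ε₀ ≠ 0) (hμ₀ : μ₀ ≠ 0)
    (E1 E2 E3 H1 H2 H3 B12 B13 B23 D12 D13 D23 J12 J13 J23 : ℝ → ℤ → ℤ → ℤ → ℝ)
    -- the E-components are twice differentiable in t
    (hE1 : ∀ k s m : ℤ, Differentiable ℝ fun t => E1 t k s m)
    (hE1' : ∀ k s m : ℤ, Differentiable ℝ (deriv fun t => E1 t k s m))
    (hE2 : ∀ k s m : ℤ, Differentiable ℝ fun t => E2 t k s m)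
    (hE2' : ∀ k s m : ℤ, Differentiable ℝ (deriv fun t => E2 t k s m))
    (hE3 : ∀ k s m : ℤ, Differentiable ℝ fun t => E3 t k s m)
    (hE3' : ∀ k s m : ℤ, Differentiable ℝ (deriv fun t => E3 t k s m))
    -- the H-, B-, D-, J-components are differentiable in t
    (hH1 : ∀ k s m : ℤ, Differentiable ℝ fun t => H1 t k s m)
    (hH2 : ∀ k s m : ℤ, Differentiable ℝ fun t => H2 t k s m)
    (hH3 : ∀ k s m : ℤ, Differentiable ℝ fun t => H3 t k s m)
    (hB12 : ∀ k s m : ℤ, Differentiable ℝ fun t => B12 t k s m)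
    (hB13 : ∀ k s m : ℤ, Differentiable ℝ fun t => B13 t k s m)
    (hB23 : ∀ k s m : ℤ, Differentiable ℝ fun t => B23 t k s m)
    (hD12 : ∀ k s m : ℤ, Differentiable ℝ fun t => D12 t k s m)
    (hD13 : ∀ k s m : ℤ, Differentiable ℝ fun t => D13 t k s m)
    (hD23 : ∀ k s m : ℤ, Differentiable ℝ fun t => D23 t k s m)
    (hJ12 : ∀ k s m : ℤ, Differentiable ℝ fun t => J12 t k s m)
    (hJ13 : ∀ k s m : ℤ, Differentiable ℝ fun t => J13 t k s m)
    (hJ23 : ∀ k s m : ℤ, Differentiable ℝ fun t => J23 t k s m)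
    -- Faraday's law
    (hFar12 : ∀ (t : ℝ) (k s m : ℤ),
      d1 (E2 t) k s m - d2 (E1 t) k s m = -deriv (fun u => B12 u k s m) t)
    (hFar13 : ∀ (t : ℝ) (k s m : ℤ),
      d1 (E3 t) k s m - d3 (E1 t) k s m = -deriv (fun u => B13 u k s m) t)
    (hFar23 : ∀ (t : ℝ) (k s m : ℤ),
      d2 (E3 t) k s m - d3 (E2 t) k s m = -deriv (fun u => B23 u k s m) t)
    -- Ampère's law
    (hAmp12 : ∀ (t : ℝ) (k s m : ℤ),
      d1 (H2 t) k s m - d2 (H1 t) k s m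
        = deriv (fun u => D12 u k s m) t + J12 t k s m)
    (hAmp13 : ∀ (t : ℝ) (k s m : ℤ),
      d1 (H3 t) k s m - d3 (H1 t) k s m
        = deriv (fun u => D13 u k s m) t + J13 t k s m)
    (hAmp23 : ∀ (t : ℝ) (k s m : ℤ),
      d2 (H3 t) k s m - d3 (H2 t) k s m
        = deriv (fun u => D23 u k s m) t + J23 t k s m)
    -- constitutive relation B = μ₀ ∗H
    (hB12H : ∀ (t : ℝ) (k s m : ℤ), B12 t k s m = μ₀ * H3 t k s (m - 1))
    (hB13H : ∀ (t : ℝ) (k s m : ℤ), B13 t k s m = -(μ₀ * H2 t k (s - 1) m))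
    (hB23H : ∀ (t : ℝ) (k s m : ℤ), B23 t k s m = μ₀ * H1 t (k - 1) s m)
    -- constitutive relation D = ε₀ ∗E
    (hD12E : ∀ (t : ℝ) (k s m : ℤ), D12 t k s m = ε₀ * E3 t k s (m - 1))
    (hD13E : ∀ (t : ℝ) (k s m : ℤ), D13 t k s m = -(ε₀ * E2 t k (s - 1) m))
    (hD23E : ∀ (t : ℝ) (k s m : ℤ), D23 t k s m = ε₀ * E1 t (k - 1) s m)
    -- homogeneous discrete Gauss law (Q = 0)
    (hGauss : ∀ (t : ℝ) (k s m : ℤ),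
      d1 (D23 t) k s m - d2 (D13 t) k s m + d3 (D12 t) k s m = 0) :
    ∀ (t : ℝ) (k s m : ℤ),
      (-d1 (d1 (E1 t)) (k - 1) s m - d2 (d2 (E1 t)) k (s - 1) m
          - d3 (d3 (E1 t)) k s (m - 1)
          + μ₀ * ε₀ * deriv (deriv fun u => E1 u (k - 1) (s - 1) (m - 1)) t
        = -(μ₀ * deriv (fun u => J23 u k (s - 1) (m - 1)) t)) ∧
      (-d1 (d1 (E2 t)) (k - 1) s m - d2 (d2 (E2 t)) k (s - 1) m
          - d3 (d3 (E2 t)) k s (m - 1)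
          + μ₀ * ε₀ * deriv (deriv fun u => E2 u (k - 1) (s - 1) (m - 1)) t
        = μ₀ * deriv (fun u => J13 u (k - 1) s (m - 1)) t) ∧
      (-d1 (d1 (E3 t)) (k - 1) s m - d2 (d2 (E3 t)) k (s - 1) m
          - d3 (d3 (E3 t)) k s (m - 1)
          + μ₀ * ε₀ * deriv (deriv fun u => E3 u (k - 1) (s - 1) (m - 1)) t
        = -(μ₀ * deriv (fun u => J12 u (k - 1) (s - 1) m) t)) := by
  have wave := stmt10_general hε₀
    (hasDerivAt_oneForm hE1 hE2 hE3) (hasDerivAt_oneForm hE1' hE2' hE3')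
    (hasDerivAt_twoForm hB12 hB13 hB23) (hasDerivAt_twoForm hD12 hD13 hD23)
    (hasDerivAt_twoForm hJ12 hJ13 hJ23)
    (fun t => by
      rw [neg_twoForm]
      exact latticeCurl_cubicStep_eq_twoForm (hFar12 t) (hFar13 t) (hFar23 t))
    (fun t => by
      rw [twoForm_add]
      exact latticeCurl_cubicStep_eq_twoForm (hAmp12 t) (hAmp13 t) (hAmp23 t))
    (fun t => twoForm_eq_smul_hodgeOne (hB12H t) (hB13H t) (hB23H t))
    (fun t => twoForm_eq_smul_hodgeOne (hD12E t) (hD13E t) (hD23E t))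
    (fun t => extDerivTwo_cubicStep_eq (hGauss t))
  intro t k s m
  have wave_at i := wave t i (k, s, m)
  simp only [sum_cubicStep, hodgeTwo_cubicStep] at wave_at
  refine ⟨?_, ?_, ?_⟩
  · simpa [neg_latticeLaplacian_cubicStep, uncurry_mk_mk, timeDeriv] using wave_at 0
  · simpa [neg_latticeLaplacian_cubicStep, uncurry_mk_mk, timeDeriv] using wave_at 1
  · simpa [neg_latticeLaplacian_cubicStep, uncurry_mk_mk, timeDeriv] using wave_at 2
end

section
/- The characteristic polynomial of the 9×9 real matrix M₂ equals X³·(X − 2)²·(X + 2)²·(X² + 8); equivalently, det(M₂ − λI) = −λ³(λ − 2)²(λ + 2)²(λ² + 8). In particular the eigenvalues of M₂ are 0 (multiplicity 3), 2 and −2 (each multiplicity 2), and ±2√2·i (each multiplicity 1). -/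
open Polynomial

/-- The coefficient matrix of the reduced system (4.21) of the two-dimensional
semi-discrete Maxwell equations on the combinatorial torus. -/
def M₂ : Matrix (Fin 9) (Fin 9) ℝ :=
  !![0, 0, 0, 0, 0, -1, 0, 1, 0;
     0, 0, 0, 0, 0, 0, 0, 1, -1;
     0, 0, 0, 0, 0, 1, 0, -1, 0;
     0, 0, 0, 0, 0, -1, 1, 0, 0;
     0, 0, 0, 0, 0, 0, 0, -1, 1;
     -1, 1, 1, 2, -3, 0, 0, 0, 0;
     -1, -1, 1, 0, 1, 0, 0, 0, 0;
     1, 1, -1, -4, 3, 0, 0, 0, 0;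
     1, -1, -1, 2, -1, 0, 0, 0, 0]

/-!
The matrix `M₂` is block antidiagonal, with upper right block `B` of size `5 × 4` and lower left
block `A` of size `4 × 5`, so its square is block diagonal and
`χ(M₂)(X) = X ^ (5 - 4) * χ(A * B)(X ^ 2)`. The product `A * B` turns out to be a convolution matrix
of the Klein four-group: it has the form `[S, T; T, S]`, where `S` and `T` are again of this form.
Hence its eigenvalues are the sums of its first row `(0, 2, 2, -4)` weighted by the four characters
of the group, namely `0`, `4`, `4` and `-8`.
-/

open Matrix

section BlockMatrices

variable {R m n : Type*} [CommRing R] [Fintype m] [DecidableEq m] [Fintype n] [DecidableEq n]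

theorem expand_charpoly (M : Matrix n n R) (p : ℕ) :
    expand R p M.charpoly = (scalar n (X ^ p) - M.map C).det := by
  rw [charpoly, AlgHom.map_det]
  congr 1
  ext i j : 1
  obtain rfl | hij := eq_or_ne i j <;> simp [*]

theorem X_pow_mul_charpoly_fromBlocks_zero₁₁_zero₂₂ (B : Matrix m n R) (A : Matrix n m R) :
    X ^ Fintype.card n * (fromBlocks 0 B A 0).charpoly =
      X ^ Fintype.card m * expand R 2 (A * B).charpoly := by
  let N : Matrix (m ⊕ n) (m ⊕ n) R[X] := fromBlocks 1 (B.map C) 0 (scalar n X)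
  have charmatrix_mul_N : (fromBlocks 0 B A 0).charmatrix * N =
      fromBlocks (scalar m X) 0 (-A.map C) (scalar n (X ^ 2) - (A * B).map C) := by
    simp [N, charmatrix_fromBlocks, fromBlocks_multiply, sq, neg_add_eq_sub, -scalar_apply,
      scalar_comm, Commute.all]
  have det_N : N.det = X ^ Fintype.card n := by
    simp [N, det_fromBlocks_zero₂₁]
  calc X ^ Fintype.card n * (fromBlocks 0 B A 0).charpoly
      = ((fromBlocks 0 B A 0).charmatrix * N).det := by
        rw [det_mul, det_N, mul_comm, charpoly]
    _ = X ^ Fintype.card m * expand R 2 (A * B).charpoly := by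
        rw [charmatrix_mul_N, det_fromBlocks_zero₁₂, expand_charpoly]
        simp

theorem charpoly_fromBlocks_zero₁₁_zero₂₂_of_card_le (B : Matrix m n R) (A : Matrix n m R)
    (h : Fintype.card n ≤ Fintype.card m) :
    (fromBlocks 0 B A 0).charpoly =
      X ^ (Fintype.card m - Fintype.card n) * expand R 2 (A * B).charpoly := by
  apply (isRegular_X_pow (Fintype.card n)).left
  simp only [← mul_assoc, ← pow_add, Nat.add_sub_cancel' h]
  exact X_pow_mul_charpoly_fromBlocks_zero₁₁_zero₂₂ B A

theorem charpoly_fromBlocks_circulant (S T : Matrix n n R) :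
    (fromBlocks S T T S).charpoly = (S + T).charpoly * (S - T).charpoly := by
  let P : Matrix (n ⊕ n) (n ⊕ n) R := fromBlocks 1 1 0 1
  let Q : Matrix (n ⊕ n) (n ⊕ n) R := fromBlocks 1 (-1) 0 1
  have Q_mul_P : Q * P = 1 := by simp [P, Q, fromBlocks_multiply]
  have conj_eq : P * (fromBlocks S T T S * Q) = fromBlocks (S + T) 0 T (S - T) := by
    simp [P, Q, fromBlocks_multiply, neg_add_eq_sub]
  calc (fromBlocks S T T S).charpoly
      = (fromBlocks S T T S * Q * P).charpoly := by rw [mul_assoc, Q_mul_P, mul_one]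
    _ = (P * (fromBlocks S T T S * Q)).charpoly := charpoly_mul_comm _ _
    _ = (S + T).charpoly * (S - T).charpoly := by rw [conj_eq, charpoly_fromBlocks_zero₁₂]

theorem charpoly_fin_two_circulant (a b : R) :
    !![a, b; b, a].charpoly = (X - C (a + b)) * (X - C (a - b)) := by
  have det_charmatrix : !![a, b; b, a].charpoly = (X - C a) * (X - C a) - C b * C b := by
    simp [charpoly, det_fin_two]
  rw [det_charmatrix, C_add, C_sub]
  ring

theorem charpoly_fromBlocks_fin_two_circulant (a b c d : R) :
    (fromBlocks !![a, b; b, a] !![c, d; d, c] !![c, d; d, c] !![a, b; b, a]).charpoly =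
      (X - C (a + b + c + d)) * (X - C (a - b + c - d)) *
        (X - C (a + b - c - d)) * (X - C (a - b - c + d)) := by
  have add_eq : !![a, b; b, a] + !![c, d; d, c] = !![a + c, b + d; b + d, a + c] := by simp
  have sub_eq : !![a, b; b, a] - !![c, d; d, c] = !![a - c, b - d; b - d, a - c] := by simp
  rw [charpoly_fromBlocks_circulant, add_eq, sub_eq, charpoly_fin_two_circulant,
    charpoly_fin_two_circulant]
  simp only [map_add, map_sub]
  ring

end BlockMatrices

/-- The nonzero upper right block of `M₂`, through which the last four variables drive the first
five. -/
def M₂UpperRight : Matrix (Fin 5) (Fin 4) ℝ :=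
  !![-1, 0, 1, 0;
     0, 0, 1, -1;
     1, 0, -1, 0;
     -1, 1, 0, 0;
     0, 0, -1, 1]

/-- The nonzero lower left block of `M₂`, through which the first five variables drive the last
four. -/
def M₂LowerLeft : Matrix (Fin 4) (Fin 5) ℝ :=
  !![-1, 1, 1, 2, -3;
     -1, -1, 1, 0, 1;
     1, 1, -1, -4, 3;
     1, -1, -1, 2, -1]

theorem M₂_eq_reindex_fromBlocks :
    M₂ = reindex finSumFinEquiv finSumFinEquiv (fromBlocks 0 M₂UpperRight M₂LowerLeft 0) := by
  ext i j
  fin_cases i <;> fin_cases j <;> rfl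

theorem M₂LowerLeft_mul_M₂UpperRight :
    M₂LowerLeft * M₂UpperRight = reindex finSumFinEquiv finSumFinEquiv
      (fromBlocks !![0, 2; 2, 0] !![2, -4; -4, 2] !![2, -4; -4, 2] !![0, 2; 2, 0]) := by
  have mul_eq : M₂LowerLeft * M₂UpperRight =
      !![0, 2, 2, -4; 2, 0, -4, 2; 2, -4, 0, 2; -4, 2, 2, 0] := by
    norm_num [M₂LowerLeft, M₂UpperRight]
  rw [mul_eq]
  ext i j
  fin_cases i <;> fin_cases j <;> rfl

theorem charpoly_M₂LowerLeft_mul_M₂UpperRight :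
    (M₂LowerLeft * M₂UpperRight).charpoly = X * (X - C 4) ^ 2 * (X + C 8) := by
  rw [M₂LowerLeft_mul_M₂UpperRight, charpoly_reindex, charpoly_fromBlocks_fin_two_circulant]
  norm_num1
  rw [C_0, C_neg]
  ring

/-- The characteristic polynomial of `M₂` is `X³(X − 2)²(X + 2)²(X² + 8)`. -/
theorem stmt16 :
    M₂.charpoly = X ^ 3 * (X - C 2) ^ 2 * (X + C 2) ^ 2 * (X ^ 2 + C 8) := by
  calc M₂.charpoly
      = (fromBlocks 0 M₂UpperRight M₂LowerLeft 0).charpoly := by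
        rw [M₂_eq_reindex_fromBlocks, charpoly_reindex]
    _ = X * expand ℝ 2 (M₂LowerLeft * M₂UpperRight).charpoly := by
        simpa using charpoly_fromBlocks_zero₁₁_zero₂₂_of_card_le M₂UpperRight M₂LowerLeft (by simp)
    _ = X * (X ^ 2 * (X ^ 2 - C 4) ^ 2 * (X ^ 2 + C 8)) := by
        simp [charpoly_M₂LowerLeft_mul_M₂UpperRight]
    _ = X ^ 3 * (X - C 2) ^ 2 * (X + C 2) ^ 2 * (X ^ 2 + C 8) := by
        have C_four : (C 4 : ℝ[X]) = C 2 ^ 2 := by rw [← C_pow]; norm_num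
        rw [C_four]
        ring
end
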